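/- Let p be a prime and let G be a group that is pseudo finite at p. For a finite p-subgroup P of G, P is a Sylow p-subgroup of its normalizer N_G(P) if and only if P is a Sylow p-subgroup of G. -/

import Mathlib

open scoped Pointwise

/-- The conjugate subgroup `g⁻¹ P g`. -/
def conjSub {G : Type*} [Group G] (g : G) (P : Subgroup G) : Subgroup G :=
  P.map (MulAut.conj g⁻¹).toMonoidHom

/-- `S` is a Sylow `p`-subgroup of the (possibly infinite) group `G`:
a finite `p`-subgroup such that every finite `p`-subgroup of `G` is conjugate
in `G` to a subgroup of `S`. -/
def IsSylow (p : ℕ) {G : Type*} [Group G] (S : Subgroup G) : Prop :=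
  Finite S ∧ IsPGroup p S ∧
    ∀ Q : Subgroup G, Finite Q → IsPGroup p Q → ∃ g : G, conjSub g Q ≤ S

/-- `S` is a Sylow `p`-subgroup of the subgroup `N` of `G`:
`S` is a finite `p`-subgroup contained in `N` such that every finite `p`-subgroup
of `G` contained in `N` is conjugate by an element of `N` to a subgroup of `S`. -/
def IsSylowIn (p : ℕ) {G : Type*} [Group G] (N S : Subgroup G) : Prop :=
  S ≤ N ∧ Finite S ∧ IsPGroup p S ∧
    ∀ Q : Subgroup G, Q ≤ N → Finite Q → IsPGroup p Q → ∃ g ∈ N, conjSub g Q ≤ S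

/-- The normalizer of a chain of subgroups: the intersection of the normalizers
of the members of the chain. -/
def chainNorm {G : Type*} [Group G] {n : ℕ} (γ : Fin (n + 1) → Subgroup G) : Subgroup G :=
  ⨅ i, Subgroup.normalizer (γ i : Set G)

/-- `G` is pseudo finite at `p` if for every chain of finite `p`-subgroups of `G`
(the trivial subgroup allowed in the chain), the normalizer of the chain has a
Sylow `p`-subgroup. -/
def PseudoFiniteAt (p : ℕ) (G : Type*) [Group G] : Prop :=
  ∀ (n : ℕ) (γ : Fin (n + 1) → Subgroup G), Monotone γ →
    (∀ i, Finite (γ i)) → (∀ i, IsPGroup p (γ i)) →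
      ∃ S : Subgroup G, IsSylowIn p (chainNorm γ) S

/-- The member of the chain preceding position `i`, with the convention that the
member preceding position `0` is the trivial subgroup. -/
def chainPrev {G : Type*} [Group G] {n : ℕ} (γ : Fin (n + 1) → Subgroup G)
    (i : Fin (n + 1)) : Subgroup G :=
  match i with
  | ⟨0, _⟩ => ⊥
  | ⟨j + 1, h⟩ => γ ⟨j, by omega⟩

/-- A strictly increasing chain `γ = (P_0 < ⋯ < P_n)` of nontrivial finite
`p`-subgroups is redundant if for every Sylow `p`-subgroup `Q` of `N_G(γ)` and
every `0 ≤ i ≤ n`, `P_i ≠ Q·P_{i-1}` (with `P_{-1} = 1`). -/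
def IsRedundant (p : ℕ) {G : Type*} [Group G] {n : ℕ} (γ : Fin (n + 1) → Subgroup G) : Prop :=
  ∀ Q : Subgroup G, IsSylowIn p (chainNorm γ) Q →
    ∀ i : Fin (n + 1), (γ i : Set G) ≠ (Q : Set G) * (chainPrev γ i : Set G)

/-- The chain obtained from `γ` by inserting the subgroup `H` immediately after
position `i`. -/
def insertChain {G : Type*} [Group G] {n : ℕ} (γ : Fin (n + 1) → Subgroup G)
    (i : Fin (n + 1)) (H : Subgroup G) : Fin (n + 2) → Subgroup G :=
  fun j =>
    if h : (j : ℕ) ≤ (i : ℕ) then γ ⟨j, by have := i.isLt; omega⟩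
    else if h2 : (j : ℕ) = (i : ℕ) + 1 then H
    else γ ⟨(j : ℕ) - 1, by have := j.isLt; omega⟩

/-- The chain obtained from `σ` by deleting the member at position `i`. -/
def deleteChain {G : Type*} [Group G] {n : ℕ} (σ : Fin (n + 2) → Subgroup G)
    (i : Fin (n + 2)) : Fin (n + 1) → Subgroup G :=
  fun j =>
    if h : (j : ℕ) < (i : ℕ) then σ ⟨j, by have := j.isLt; omega⟩
    else σ ⟨(j : ℕ) + 1, by have := j.isLt; omega⟩

/-!
Applied to the chain `(1)`, whose normalizer is `G`, pseudo-finiteness provides a Sylow `p`-subgroup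
of `G`, a conjugate `T` of which contains `P`. If `P` is Sylow in `N_G(P)`, then `P` is all of
`N_T(P)`, since a finite group cannot be conjugated into a proper subgroup of itself; as normalizers
grow in the finite `p`-group `T`, this forces `P = T`. Conversely, if `P` is Sylow in
`G`, any finite `p`-subgroup `Q` of `N_G(P)` generates with `P` the finite `p`-group `PQ`, which is
conjugate into `P` and hence equal to `P`.
-/

section Conjugation

variable {G : Type*} [Group G] {P Q : Subgroup G} {g : G}

theorem conjSub_eq_smul (g : G) (P : Subgroup G) : conjSub g P = MulAut.conj g⁻¹ • P :=
  rfl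

theorem conjSub_mul (g h : G) (P : Subgroup G) :
    conjSub (g * h) P = conjSub h (conjSub g P) := by
  simp only [conjSub_eq_smul, mul_inv_rev, map_mul, mul_smul]

theorem conjSub_le_iff_le_conjSub_inv : conjSub g P ≤ Q ↔ P ≤ conjSub g⁻¹ Q := by
  simp only [conjSub_eq_smul, map_inv, Subgroup.pointwise_smul_subset_iff]

theorem card_conjSub (g : G) (P : Subgroup G) : Nat.card (conjSub g P) = Nat.card P :=
  Subgroup.card_map_of_injective (MulAut.conj g⁻¹).injective

theorem eq_of_le_of_conjSub_le [Finite Q] (hPQ : P ≤ Q) (hQP : conjSub g Q ≤ P) : P = Q := by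
  have : Finite P := .of_injective _ (Subgroup.inclusion_injective hPQ)
  refine Subgroup.eq_of_le_of_card_ge hPQ ?_
  calc
    Nat.card Q = Nat.card (conjSub g Q) := (card_conjSub g Q).symm
    _ ≤ Nat.card P := Subgroup.card_le_of_le hQP

end Conjugation

section Normalizer

variable {G : Type*} [Group G] {P Q T : Subgroup G}

theorem finite_sup_of_le_normalizer [Finite P] [Finite Q]
    (hQ : Q ≤ Subgroup.normalizer (P : Set G)) : Finite (P ⊔ Q : Subgroup G) := by
  have hfin : ((P : Set G) * (Q : Set G)).Finite := (Set.toFinite _).mul (Set.toFinite _)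
  rwa [← Subgroup.coe_mul_of_right_le_normalizer_left P Q hQ] at hfin

theorem eq_of_le_of_inf_normalizer_le (hT : NormalizerCondition T) (hPT : P ≤ T)
    (hN : T ⊓ Subgroup.normalizer (P : Set G) ≤ P) : P = T := by
  have hself : Subgroup.normalizer (P.subgroupOf T : Set T) = P.subgroupOf T := by
    refine le_antisymm ?_ Subgroup.le_normalizer
    rw [← Subgroup.subgroupOf_normalizer_eq hPT]
    exact fun x hx => hN ⟨x.2, hx⟩
  have htop := normalizerCondition_iff_only_full_group_self_normalizing.1 hT _ hself
  exact hPT.antisymm (Subgroup.subgroupOf_eq_top.1 htop)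

end Normalizer

section Sylow

variable {p : ℕ} {G : Type*} [Group G] {N P Q S : Subgroup G}

theorem isSylowIn_top_iff : IsSylowIn p ⊤ S ↔ IsSylow p S := by
  simp only [IsSylowIn, IsSylow, le_top, Subgroup.mem_top, true_and, true_imp_iff]

theorem IsSylowIn.eq_of_le [Finite Q] (hP : IsSylowIn p N P) (hQ : IsPGroup p Q)
    (hQN : Q ≤ N) (hPQ : P ≤ Q) : P = Q := by
  obtain ⟨-, -, -, hconj⟩ := hP
  obtain ⟨g, -, hg⟩ := hconj Q hQN inferInstance hQ
  exact eq_of_le_of_conjSub_le hPQ hg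

theorem IsSylow.eq_of_le [Finite Q] (hP : IsSylow p P) (hQ : IsPGroup p Q) (hPQ : P ≤ Q) :
    P = Q :=
  (isSylowIn_top_iff.2 hP).eq_of_le hQ le_top hPQ

theorem isSylow_conjSub (hS : IsSylow p S) (g : G) : IsSylow p (conjSub g S) := by
  obtain ⟨hfin, hp, hconj⟩ := hS
  refine ⟨.of_equiv S (Subgroup.equivSMul (MulAut.conj g⁻¹) S).toEquiv, hp.map _,
    fun Q hQfin hQ => ?_⟩
  obtain ⟨k, hk⟩ := hconj Q hQfin hQ
  exact ⟨k * g, conjSub_mul k g Q ▸ Subgroup.map_mono hk⟩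

theorem IsSylow.exists_isSylow_ge [Finite P] (hS : IsSylow p S) (hP : IsPGroup p P) :
    ∃ T, IsSylow p T ∧ P ≤ T := by
  obtain ⟨g, hg⟩ := hS.2.2 P inferInstance hP
  exact ⟨conjSub g⁻¹ S, isSylow_conjSub hS g⁻¹, conjSub_le_iff_le_conjSub_inv.1 hg⟩

theorem IsSylow.le_of_le_normalizer [Finite Q] (hP : IsSylow p P) (hQ : IsPGroup p Q)
    (hQN : Q ≤ Subgroup.normalizer (P : Set G)) : Q ≤ P := by
  have : Finite P := hP.1
  have : Finite (P ⊔ Q : Subgroup G) := finite_sup_of_le_normalizer hQN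
  have hsup : P = P ⊔ Q :=
    hP.eq_of_le (hP.2.1.to_sup_of_normal_left' hQ hQN) le_sup_left
  exact sup_eq_left.1 hsup.symm

theorem IsSylow.isSylowIn_normalizer (hP : IsSylow p P) :
    IsSylowIn p (Subgroup.normalizer (P : Set G)) P := by
  refine ⟨Subgroup.le_normalizer, hP.1, hP.2.1, fun Q hQN _ hQ => ⟨1, one_mem _, ?_⟩⟩
  simpa only [conjSub_eq_smul, inv_one, map_one, one_smul] using hP.le_of_le_normalizer hQ hQN

theorem eq_of_isSylowIn_normalizer_of_le [Fact p.Prime] [Finite Q]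
    (hP : IsSylowIn p (Subgroup.normalizer (P : Set G)) P) (hQ : IsPGroup p Q) (hPQ : P ≤ Q) :
    P = Q := by
  have : Finite (Q ⊓ Subgroup.normalizer (P : Set G) : Subgroup G) :=
    .of_injective _ (Subgroup.inclusion_injective inf_le_left)
  have : Group.IsNilpotent Q := hQ.isNilpotent
  have hinf : P = Q ⊓ Subgroup.normalizer (P : Set G) :=
    hP.eq_of_le (hQ.to_le inf_le_left) inf_le_right (le_inf hPQ Subgroup.le_normalizer)
  exact eq_of_le_of_inf_normalizer_le Group.normalizerCondition_of_isNilpotent hPQ hinf.ge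

theorem PseudoFiniteAt.exists_isSylow (hG : PseudoFiniteAt p G) :
    ∃ S : Subgroup G, IsSylow p S := by
  obtain ⟨S, hS⟩ := hG 0 (fun _ => ⊥) monotone_const (fun _ => inferInstance)
    (fun _ => IsPGroup.of_bot)
  have htop : chainNorm (fun _ : Fin (0 + 1) => (⊥ : Subgroup G)) = ⊤ := by
    simp only [chainNorm, Subgroup.normalizer_eq_top, iInf_top]
  exact ⟨S, isSylowIn_top_iff.1 (htop ▸ hS)⟩

theorem isSylowIn_normalizer_iff_isSylow_general (hp : p.Prime)
    (hG : ∃ S : Subgroup G, IsSylow p S) :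
    IsSylowIn p (Subgroup.normalizer (P : Set G)) P ↔ IsSylow p P := by
  have : Fact p.Prime := ⟨hp⟩
  refine ⟨fun hP => ?_, IsSylow.isSylowIn_normalizer⟩
  obtain ⟨S, hS⟩ := hG
  have : Finite P := hP.2.1
  obtain ⟨T, hT, hPT⟩ := hS.exists_isSylow_ge hP.2.2.1
  have : Finite T := hT.1
  exact eq_of_isSylowIn_normalizer_of_le hP hT.2.1 hPT ▸ hT

end Sylow

/-- In a group pseudo finite at `p`, a finite `p`-subgroup `P` is a Sylow
`p`-subgroup of its normalizer `N_G(P)` if and only if it is a Sylow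
`p`-subgroup of `G`. -/
theorem isSylowIn_normalizer_iff_isSylow (p : ℕ) (hp : p.Prime) {G : Type*} [Group G]
    (hG : PseudoFiniteAt p G) {P : Subgroup G} (hPfin : Finite P) (hP : IsPGroup p P) :
    IsSylowIn p (Subgroup.normalizer (P : Set G)) P ↔ IsSylow p P :=
  isSylowIn_normalizer_iff_isSylow_general hp hG.exists_isSylow
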